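/- arXiv:2009.05892 — 2 statements merged into one kernel-verified Lean document; each statement's English description precedes it below -/
import Mathlib

section
/- Under the global causal null, the wealth process (M_t)_{t=0}^{n−|I_0|} of the i-bet test is a nonnegative martingale with respect to the filtration (ℱ_t): M_t ≥ 0 almost surely, M_t is ℱ_t-measurable, M_0 = 1, and E(M_t | ℱ_{t−1}) = M_{t−1} almost surely for every 1 ≤ t ≤ n−|I_0|. -/
open MeasureTheory ProbabilityTheory
open scoped ENNReal

/-!
Fix a unit `i`. As long as `i` has not been revealed, everything the analyst has seen is a function
of `𝒢` and of the assignments of the other units: on the event `{i ∉ I t}` the σ-algebra `ℱ t` is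
coarser than `𝒢 ⊔ σ(A j : j ≠ i)`, which is independent of `A i`. Since `i` is unrevealed on the
event `{π (t + 1) = i}`, the centred payoff `A i / μ i - 1` has conditional mean zero given `ℱ t`
there. On this event bet and payoff are bounded, so the bet is pulled out of the conditional
expectation, and the countably many events `{π (t + 1) = i}` are then glued together. Integrability
survives the gluing because the wealth is nonnegative and its integral over each event does not
change.
-/

section CoarserOn

variable {Ω ι β : Type*} {m m₁ m₂ m' : MeasurableSpace Ω} {C : Set Ω}

/-- The σ-algebra `m` is coarser than `m'` on the event `C`: every `m`-event becomes an `m'`-event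
once it is intersected with `C`. In particular `C` itself belongs to `m'`. This expresses that, on
`C`, the information in `m` is contained in that of `m'`. -/
def CoarserOn (m m' : MeasurableSpace Ω) (C : Set Ω) : Prop :=
  ∀ B, MeasurableSet[m] B → MeasurableSet[m'] (B ∩ C)

lemma CoarserOn.measurableSet (h : CoarserOn m m' C) : MeasurableSet[m'] C := by
  simpa only [Set.univ_inter] using h Set.univ MeasurableSet.univ

lemma CoarserOn.inter {D : Set Ω} (h : CoarserOn m m' C) (hD : MeasurableSet[m] D) :
    CoarserOn m m' (D ∩ C) := by
  intro B hB
  rw [← Set.inter_assoc]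
  exact h _ (hB.inter hD)

lemma CoarserOn.sup (h₁ : CoarserOn m₁ m' C) (h₂ : CoarserOn m₂ m' C) :
    CoarserOn (m₁ ⊔ m₂) m' C := by
  intro B hB
  replace hB := MeasurableSpace.measurableSet_sup.1 hB
  induction hB with
  | basic B hB => exact hB.elim (h₁ B) (h₂ B)
  | empty => rw [Set.empty_inter]; exact MeasurableSet.empty
  | compl B _ ih =>
    have hcompl : Bᶜ ∩ C = C \ (B ∩ C) := by grind
    rw [hcompl]
    exact h₁.measurableSet.diff ih
  | iUnion B _ ih =>
    rw [Set.iUnion_inter]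
    exact MeasurableSet.iUnion ih

lemma CoarserOn.comap_eval [Countable ι] [MeasurableSpace ι] [MeasurableSingletonClass ι]
    [MeasurableSpace β] {f : ι → Ω → β} {p : Ω → ι} (h : CoarserOn m m' C)
    (hp : Measurable[m] p) (hf : ∀ ω ∈ C, Measurable[m'] (f (p ω))) :
    CoarserOn (MeasurableSpace.comap (fun ω => f (p ω) ω) inferInstance) m' C := by
  rintro _ ⟨S, hS, rfl⟩
  have hunion : (fun ω => f (p ω) ω) ⁻¹' S ∩ C = ⋃ j, f j ⁻¹' S ∩ (p ⁻¹' {j} ∩ C) := by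
    ext ω
    simp
  rw [hunion]
  refine MeasurableSet.iUnion fun j => ?_
  rcases (p ⁻¹' {j} ∩ C).eq_empty_or_nonempty with hempty | ⟨ω, rfl, hωC⟩
  · rw [hempty, Set.inter_empty]
    exact MeasurableSet.empty
  · exact (hf ω hωC hS).inter (h _ (hp (measurableSet_singleton _)))

end CoarserOn

lemma iUnion_fiber {α ι : Type*} (p : α → ι) : ⋃ i, p ⁻¹' {i} = Set.univ := by
  rw [← Set.preimage_iUnion, Set.iUnion_of_singleton, Set.preimage_univ]

section ConditionalExpectation

variable {Ω ι : Type*} {m m' mX m0 : MeasurableSpace Ω} {P : Measure Ω} {C : Set Ω}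
  {E : Type*} [NormedAddCommGroup E] [NormedSpace ℝ E] [CompleteSpace E]

lemma CoarserOn.condExp_restrict_ae_eq_integral [IsFiniteMeasure P] {X : Ω → E}
    (h : CoarserOn m m' C) (hm : m ≤ m0) (hm' : m' ≤ m0) (hmX : mX ≤ m0)
    (hX : StronglyMeasurable[mX] X) (hXint : Integrable X P) (hindep : Indep mX m' P) :
    (P.restrict C)[X | m] =ᵐ[P.restrict C] fun _ => ∫ ω, X ω ∂P := by
  refine (ae_eq_condExp_of_forall_setIntegral_eq hm hXint.restrict
    (fun _ _ _ => (integrable_const _).integrableOn) (fun B hB _ => ?_)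
    stronglyMeasurable_const.aestronglyMeasurable).symm
  rw [Measure.restrict_restrict (hm _ hB), ← setIntegral_condExp hm' hXint (h B hB)]
  refine setIntegral_congr_ae (hm' _ (h B hB)) ?_
  filter_upwards [condExp_indep_eq hmX hm' hX hindep] with ω hω _ using hω.symm

lemma condExp_add_mul_ae_eq_of_condExp_ae_eq_zero {Y v X : Ω → ℝ} (hm : m ≤ m0)
    [SigmaFinite (P.trim hm)] (hY : StronglyMeasurable[m] Y) (hYint : Integrable Y P)
    (hv : StronglyMeasurable[m] v) (hXint : Integrable X P) (hvX : Integrable (v * X) P)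
    (hX : P[X | m] =ᵐ[P] 0) :
    P[Y + v * X | m] =ᵐ[P] Y := by
  filter_upwards [condExp_add hYint hvX m,
    condExp_mul_of_stronglyMeasurable_left hv hvX hXint, hX] with ω hadd hmul hzero
  rw [hadd, Pi.add_apply, hmul, Pi.mul_apply, hzero, Pi.zero_apply, mul_zero, add_zero,
    condExp_of_stronglyMeasurable hm hY hYint]

variable [Countable ι] [MeasurableSpace ι] [MeasurableSingletonClass ι] {p : Ω → ι}

lemma integrable_of_setIntegral_fiber_eq {f g : Ω → ℝ} (hp : Measurable p)
    (hf : 0 ≤ᵐ[P] f) (hfint : ∀ i, IntegrableOn f (p ⁻¹' {i}) P) (hg : Integrable g P)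
    (hfg : ∀ i, ∫ ω in p ⁻¹' {i}, f ω ∂P = ∫ ω in p ⁻¹' {i}, g ω ∂P) : Integrable f P := by
  have hdisj : Pairwise (Function.onFun Disjoint fun i => p ⁻¹' {i}) := pairwise_disjoint_fiber p
  have hnorm : ∀ i, ∫ ω in p ⁻¹' {i}, ‖f ω‖ ∂P = ∫ ω in p ⁻¹' {i}, g ω ∂P := by
    intro i
    rw [← hfg i]
    refine integral_congr_ae (ae_restrict_of_ae ?_)
    filter_upwards [hf] with ω hω using Real.norm_of_nonneg hω
  rw [← integrableOn_univ, ← iUnion_fiber p]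
  refine integrableOn_iUnion_of_summable_integral_norm hfint ?_
  simp_rw [hnorm]
  exact (hasSum_integral_iUnion (fun i => hp (measurableSet_singleton i)) hdisj
    hg.integrableOn).summable

lemma integrable_of_condExp_restrict_fiber [IsFiniteMeasure P] {f g : Ω → ℝ} (hm : m ≤ m0)
    (hp : Measurable[m] p) (hf : 0 ≤ᵐ[P] f) (hfint : ∀ i, IntegrableOn f (p ⁻¹' {i}) P)
    (hg : Integrable g P)
    (hfg : ∀ i, (P.restrict (p ⁻¹' {i}))[f | m] =ᵐ[P.restrict (p ⁻¹' {i})] g) :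
    Integrable f P :=
  integrable_of_setIntegral_fiber_eq (hp.mono hm le_rfl) hf hfint hg fun i => by
    rw [← integral_congr_ae (hfg i), integral_condExp hm]

lemma condExp_ae_eq_of_condExp_restrict_fiber {f g : Ω → E} (hm : m ≤ m0)
    [SigmaFinite (P.trim hm)] (hp : Measurable[m] p) (hf : Integrable f P)
    (hfg : ∀ i, (P.restrict (p ⁻¹' {i}))[f | m] =ᵐ[P.restrict (p ⁻¹' {i})] g) :
    P[f | m] =ᵐ[P] g := by
  rw [← P.restrict_univ, ← iUnion_fiber p, ae_eq_restrict_iUnion_iff, iUnion_fiber, P.restrict_univ]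
  exact fun i => (condExp_restrict_ae_eq_restrict hm (hp (measurableSet_singleton i)) hf).symm.trans
    (hfg i)

end ConditionalExpectation

section BettingFactor

variable {μ w a : ℝ}

lemma one_add_bet_mul_payoff_nonneg (hμ : μ ∈ Set.Ioo (0 : ℝ) 1) (ha : a ∈ Set.Icc (0 : ℝ) 1)
    (hw : w ∈ Set.Icc (-(μ / (1 - μ))) 1) : 0 ≤ 1 + w * (a / μ - 1) := by
  obtain ⟨hμ0, hμ1⟩ := hμ
  obtain ⟨ha0, ha1⟩ := ha
  obtain ⟨hwl, hwu⟩ := hw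
  have hlower : 0 ≤ w * (1 - μ) + μ := by
    rw [← neg_div, div_le_iff₀ (by linarith)] at hwl
    linarith
  -- The factor is affine in `a`, with values `1 - w` at `0` and `(w * (1 - μ) + μ) / μ` at `1`.
  have hconvex : 1 + w * (a / μ - 1) = (1 - a) * (1 - w) + a * ((w * (1 - μ) + μ) / μ) := by
    field_simp
    ring
  rw [hconvex]
  exact add_nonneg (mul_nonneg (by linarith) (by linarith))
    (mul_nonneg ha0 (div_nonneg hlower hμ0.le))

lemma abs_payoff_le (hμ : μ ∈ Set.Ioo (0 : ℝ) 1) (ha : a ∈ Set.Icc (0 : ℝ) 1) :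
    |a / μ - 1| ≤ 1 / μ := by
  have hone : 1 ≤ 1 / μ := (one_le_div hμ.1).2 hμ.2.le
  have hlower : 0 ≤ a / μ := div_nonneg ha.1 hμ.1.le
  have hupper : a / μ ≤ 1 / μ := div_le_div_of_nonneg_right ha.2 hμ.1.le
  exact abs_le.2 ⟨by linarith, by linarith⟩

lemma abs_bet_le (hμ : μ ∈ Set.Ioo (0 : ℝ) 1) (hw : w ∈ Set.Icc (-(μ / (1 - μ))) 1) :
    |w| ≤ 1 / (1 - μ) := by
  have hpos : 0 < 1 - μ := sub_pos.2 hμ.2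
  have hone : 1 ≤ 1 / (1 - μ) := (one_le_div hpos).2 (by linarith [hμ.1])
  have hlower : μ / (1 - μ) ≤ 1 / (1 - μ) := div_le_div_of_nonneg_right hμ.2.le hpos.le
  exact abs_le.2 ⟨by linarith [hw.1], hw.2.trans hone⟩

end BettingFactor

section Revelation

variable {Ω ι β : Type*} [MeasurableSpace β] {𝒢 m0 : MeasurableSpace Ω} {P : Measure Ω}
  {A : ι → Ω → β}

/-- The information `𝒢 ⊔ σ(A j : j ≠ i)` contained in everything except the variable `A i`. -/
abbrev sigmaExcept (A : ι → Ω → β) (𝒢 : MeasurableSpace Ω) (i : ι) : MeasurableSpace Ω :=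
  𝒢 ⊔ ⨆ j ≠ i, MeasurableSpace.comap (A j) inferInstance

lemma sigmaExcept_le (h𝒢 : 𝒢 ≤ m0) (hA : ∀ i, Measurable (A i)) (i : ι) :
    sigmaExcept A 𝒢 i ≤ m0 :=
  sup_le h𝒢 (iSup₂_le fun j _ => (hA j).comap_le)

lemma comap_le_sigmaExcept {i j : ι} (hji : j ≠ i) :
    MeasurableSpace.comap (A j) inferInstance ≤ sigmaExcept A 𝒢 i :=
  le_sup_of_le_right (le_iSup₂_of_le j hji le_rfl)

lemma indep_comap_sigmaExcept (h𝒢 : 𝒢 ≤ m0) (hA : ∀ i, Measurable (A i))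
    (hindep : iIndep (fun j : Option ι =>
      j.elim 𝒢 (fun i => MeasurableSpace.comap (A i) inferInstance)) P) (i : ι) :
    Indep (MeasurableSpace.comap (A i) inferInstance) (sigmaExcept A 𝒢 i) P := by
  have hle : ∀ j : Option ι,
      j.elim 𝒢 (fun i => MeasurableSpace.comap (A i) inferInstance) ≤ m0 := by
    rintro (_ | j)
    exacts [h𝒢, (hA j).comap_le]
  have hdisj := indep_iSup_of_disjoint hle hindep (S := {some i}) (T := {some i}ᶜ)
    disjoint_compl_right
  rw [iSup_singleton] at hdisj
  refine indep_of_indep_of_le_right hdisj (sup_le ?_ (iSup₂_le fun j hji => ?_))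
  · exact le_iSup₂_of_le none (by simp) le_rfl
  · exact le_iSup₂_of_le (some j) (by simpa using hji) le_rfl

variable [MeasurableSpace ι] {I₀ : Set ι} {T : ℕ} {π : ℕ → Ω → ι} {I : ℕ → Ω → Set ι}
  {ℱ : ℕ → MeasurableSpace Ω} {t : ℕ}

/-- The interactive protocol, run for `T` rounds: starting from `𝒢` and the variables indexed by
`I₀`, round `t + 1` chooses a not yet revealed index `π (t + 1)` on the basis of the current
information `ℱ t` and reveals the corresponding variable. `I t` is the set of revealed indices;
nothing is required of `π`, `I` and `ℱ` after round `T`. -/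
structure IsRevelation (A : ι → Ω → β) (𝒢 : MeasurableSpace Ω) (I₀ : Set ι) (T : ℕ)
    (π : ℕ → Ω → ι) (I : ℕ → Ω → Set ι) (ℱ : ℕ → MeasurableSpace Ω) : Prop where
  revealed_zero : ∀ ω, I 0 ω = I₀
  revealed_succ : ∀ t < T, ∀ ω, I (t + 1) ω = insert (π (t + 1) ω) (I t ω)
  info_zero : ℱ 0 = 𝒢 ⊔ ⨆ i ∈ I₀, MeasurableSpace.comap (A i) inferInstance
  info_succ : ∀ t < T, ℱ (t + 1) = ℱ t ⊔
    MeasurableSpace.comap (fun ω => A (π (t + 1) ω) ω) inferInstance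
  measurable_choice : ∀ t < T, Measurable[ℱ t] (π (t + 1))
  choice_notMem : ∀ t < T, ∀ ω, π (t + 1) ω ∉ I t ω

namespace IsRevelation

lemma info_le_succ (h : IsRevelation A 𝒢 I₀ T π I ℱ) (ht : t < T) : ℱ t ≤ ℱ (t + 1) := by
  rw [h.info_succ t ht]
  exact le_sup_left

lemma measurable_eval_choice (h : IsRevelation A 𝒢 I₀ T π I ℱ) (ht : t < T) :
    Measurable[ℱ (t + 1)] fun ω => A (π (t + 1) ω) ω := by
  rw [measurable_iff_comap_le, h.info_succ t ht]
  exact le_sup_right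

variable [Countable ι] [MeasurableSingletonClass ι]

lemma info_le (h : IsRevelation A 𝒢 I₀ T π I ℱ) (h𝒢 : 𝒢 ≤ m0) (hA : ∀ i, Measurable (A i))
    (ht : t ≤ T) : ℱ t ≤ m0 := by
  induction t with
  | zero =>
    rw [h.info_zero]
    exact sup_le h𝒢 (iSup₂_le fun i _ => (hA i).comap_le)
  | succ t ih =>
    have hchoice : Measurable (π (t + 1)) :=
      (h.measurable_choice t ht).mono (ih (Nat.le_of_lt ht)) le_rfl
    have heval : Measurable (Function.uncurry A) := measurable_from_prod_countable_right hA
    rw [h.info_succ t ht]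
    exact sup_le (ih (Nat.le_of_lt ht)) (heval.comp (hchoice.prodMk measurable_id)).comap_le

lemma measurableSet_choice_eq (h : IsRevelation A 𝒢 I₀ T π I ℱ) (h𝒢 : 𝒢 ≤ m0)
    (hA : ∀ i, Measurable (A i)) (ht : t < T) (i : ι) : MeasurableSet (π (t + 1) ⁻¹' {i}) :=
  h.info_le h𝒢 hA ht.le _ (h.measurable_choice t ht (measurableSet_singleton i))

lemma coarserOn_notMem_revealed (h : IsRevelation A 𝒢 I₀ T π I ℱ) (ht : t ≤ T) (i : ι) :
    CoarserOn (ℱ t) (sigmaExcept A 𝒢 i) {ω | i ∉ I t ω} := by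
  induction t with
  | zero =>
    intro B hB
    by_cases hi : i ∈ I₀
    · simp [h.revealed_zero, hi]
    · have hle : ℱ 0 ≤ sigmaExcept A 𝒢 i := by
        rw [h.info_zero]
        exact sup_le le_sup_left
          (iSup₂_le fun j hj => comap_le_sigmaExcept (ne_of_mem_of_not_mem hj hi))
      simpa [h.revealed_zero, hi] using hle B hB
  | succ t ih =>
    have hunrevealed : {ω | i ∉ I (t + 1) ω} = π (t + 1) ⁻¹' {i}ᶜ ∩ {ω | i ∉ I t ω} := by
      ext ω
      simp [h.revealed_succ t ht, eq_comm]
    have hold : CoarserOn (ℱ t) (sigmaExcept A 𝒢 i) {ω | i ∉ I (t + 1) ω} := by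
      rw [hunrevealed]
      exact (ih (Nat.le_of_lt ht)).inter
        (h.measurable_choice t ht (measurableSet_singleton i).compl)
    rw [h.info_succ t ht]
    refine hold.sup (hold.comap_eval (h.measurable_choice t ht) fun ω hω => ?_)
    rw [hunrevealed] at hω
    exact measurable_iff_comap_le.2 (comap_le_sigmaExcept hω.1)

lemma coarserOn_choice_eq (h : IsRevelation A 𝒢 I₀ T π I ℱ) (ht : t < T) (i : ι) :
    CoarserOn (ℱ t) (sigmaExcept A 𝒢 i) (π (t + 1) ⁻¹' {i}) := by
  have hsubset : π (t + 1) ⁻¹' {i} ⊆ {ω | i ∉ I t ω} := by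
    rintro ω rfl
    exact h.choice_notMem t ht ω
  rw [← Set.inter_eq_left.2 hsubset]
  exact (h.coarserOn_notMem_revealed ht.le i).inter
    (h.measurable_choice t ht (measurableSet_singleton i))

end IsRevelation

end Revelation

section Wealth

variable {Ω ι : Type*} {𝒢 m0 : MeasurableSpace Ω} {P : Measure Ω} {A : ι → Ω → ℝ} {μ : ι → ℝ}
  {I₀ : Set ι} {T : ℕ} {π : ℕ → Ω → ι} {I : ℕ → Ω → Set ι} {ℱ : ℕ → MeasurableSpace Ω}
  {w : ℕ → Ω → ℝ} {t : ℕ}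

/-- The wealth after `t` rounds of betting the fraction `w j` on the payoff of the unit `π j`, for
`j = 1, …, t`, starting from wealth `1`. The product runs over `j = 0, …, t - 1` with shifted
index. -/
noncomputable def wealth (A : ι → Ω → ℝ) (μ : ι → ℝ) (π : ℕ → Ω → ι) (w : ℕ → Ω → ℝ) (t : ℕ)
    (ω : Ω) : ℝ :=
  ∏ j ∈ Finset.range t, (1 + w (j + 1) ω * (A (π (j + 1) ω) ω / μ (π (j + 1) ω) - 1))

lemma wealth_zero (ω : Ω) : wealth A μ π w 0 ω = 1 :=
  Finset.prod_range_zero _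

lemma wealth_succ (t : ℕ) (ω : Ω) : wealth A μ π w (t + 1) ω = wealth A μ π w t ω *
    (1 + w (t + 1) ω * (A (π (t + 1) ω) ω / μ (π (t + 1) ω) - 1)) :=
  Finset.prod_range_succ _ t

lemma wealth_succ_eqOn_choice_eq (t : ℕ) (i : ι) :
    Set.EqOn (wealth A μ π w (t + 1))
      (wealth A μ π w t + (wealth A μ π w t * w (t + 1)) * fun ω => A i ω / μ i - 1)
      (π (t + 1) ⁻¹' {i}) := by
  rintro ω rfl
  simp only [wealth_succ, Pi.add_apply, Pi.mul_apply]
  ring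

/-- The distributional assumptions of the global causal null: the variables `A i` have values in
`[0, 1]` and means `μ i ∈ (0, 1)`, and they are mutually independent and jointly independent of
`𝒢`. Joint independence is encoded by the index type `Option ι`, with `none` standing for `𝒢`. -/
structure IsGlobalNull (𝒢 : MeasurableSpace Ω) {m0 : MeasurableSpace Ω} (P : Measure Ω)
    (A : ι → Ω → ℝ) (μ : ι → ℝ) : Prop where
  mean_mem : ∀ i, μ i ∈ Set.Ioo (0 : ℝ) 1
  measurable : ∀ i, Measurable (A i)
  mem_Icc : ∀ i, ∀ᵐ ω ∂P, A i ω ∈ Set.Icc (0 : ℝ) 1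
  integral_eq : ∀ i, ∫ ω, A i ω ∂P = μ i
  le : 𝒢 ≤ m0
  iIndep : iIndep (fun j : Option ι =>
    j.elim 𝒢 (fun i => MeasurableSpace.comap (A i) inferInstance)) P

/-- Predictable bets `w 1, …, w T` within the range for which no outcome in `[0, 1]` of the chosen
unit leads to negative wealth. -/
structure IsPredictableBet (P : Measure Ω) (μ : ι → ℝ) (T : ℕ) (π : ℕ → Ω → ι)
    (ℱ : ℕ → MeasurableSpace Ω) (w : ℕ → Ω → ℝ) : Prop where
  measurable : ∀ t < T, Measurable[ℱ t] (w (t + 1))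
  mem_Icc : ∀ t < T, ∀ᵐ ω ∂P,
    w (t + 1) ω ∈ Set.Icc (-(μ (π (t + 1) ω) / (1 - μ (π (t + 1) ω)))) 1

lemma IsGlobalNull.integrable [IsFiniteMeasure P] (hnull : IsGlobalNull 𝒢 P A μ) (i : ι) :
    Integrable (A i) P :=
  Integrable.of_mem_Icc 0 1 (hnull.measurable i).aemeasurable (hnull.mem_Icc i)

lemma integral_eq_measureReal_of_zero_or_one {f : Ω → ℝ} (hf : Measurable f)
    (hf01 : ∀ ω, f ω = 0 ∨ f ω = 1) : ∫ ω, f ω ∂P = P.real {ω | f ω = 1} := by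
  have hindicator : f = Set.indicator {ω | f ω = 1} 1 := by
    ext ω
    rcases hf01 ω with h | h <;> simp [h]
  conv_lhs => rw [hindicator]
  exact integral_indicator_one (hf (measurableSet_singleton 1))

lemma IsGlobalNull.of_zero_or_one (hμ : ∀ i, μ i ∈ Set.Ioo (0 : ℝ) 1)
    (hA : ∀ i, Measurable (A i)) (hA01 : ∀ i ω, A i ω = 0 ∨ A i ω = 1)
    (hA1 : ∀ i, P {ω | A i ω = 1} = ENNReal.ofReal (μ i)) (h𝒢 : 𝒢 ≤ m0)
    (hindep : ProbabilityTheory.iIndep (fun j : Option ι =>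
      j.elim 𝒢 (fun i => MeasurableSpace.comap (A i) inferInstance)) P) :
    IsGlobalNull 𝒢 P A μ where
  mean_mem := hμ
  measurable := hA
  mem_Icc i := ae_of_all P fun ω => by rcases hA01 i ω with h | h <;> simp [h]
  integral_eq i := by
    rw [integral_eq_measureReal_of_zero_or_one (hA i) (hA01 i), Measure.real, hA1,
      ENNReal.toReal_ofReal (hμ i).1.le]
  le := h𝒢
  iIndep := hindep

lemma wealth_nonneg [Countable ι] (hnull : IsGlobalNull 𝒢 P A μ)
    (hbet : IsPredictableBet P μ T π ℱ w) (ht : t ≤ T) : 0 ≤ᵐ[P] wealth A μ π w t := by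
  induction t with
  | zero => exact Filter.Eventually.of_forall fun ω => by simp [wealth_zero]
  | succ t ih =>
    filter_upwards [ih (Nat.le_of_lt ht), ae_all_iff.2 hnull.mem_Icc, hbet.mem_Icc t ht]
      with ω hwealth hAω hwω
    rw [wealth_succ]
    exact mul_nonneg hwealth (one_add_bet_mul_payoff_nonneg (hnull.mean_mem _) (hAω _) hwω)

namespace IsRevelation

variable [Countable ι] [MeasurableSpace ι] [MeasurableSingletonClass ι]

lemma measurable_wealth (hrev : IsRevelation A 𝒢 I₀ T π I ℱ)
    (hw : ∀ t < T, Measurable[ℱ t] (w (t + 1))) (ht : t ≤ T) :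
    Measurable[ℱ t] (wealth A μ π w t) := by
  induction t with
  | zero => exact (funext wealth_zero : wealth A μ π w 0 = _) ▸ measurable_const
  | succ t ih =>
    have hle := hrev.info_le_succ ht
    have hmean : Measurable[ℱ (t + 1)] fun ω => μ (π (t + 1) ω) :=
      (measurable_of_countable μ).comp ((hrev.measurable_choice t ht).mono hle le_rfl)
    have hpayoff := ((hrev.measurable_eval_choice ht).div hmean).sub_const 1
    have hfactor := (((hw t ht).mono hle le_rfl).mul hpayoff).const_add 1
    exact (funext (wealth_succ t) : wealth A μ π w (t + 1) = _) ▸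
      ((ih (Nat.le_of_lt ht)).mono hle le_rfl).mul hfactor

lemma integrableOn_wealth_mul_bet_mul_payoff (hrev : IsRevelation A 𝒢 I₀ T π I ℱ)
    (hnull : IsGlobalNull 𝒢 P A μ) (hbet : IsPredictableBet P μ T π ℱ w) (ht : t < T) (i : ι)
    (hint : Integrable (wealth A μ π w t) P) :
    IntegrableOn ((wealth A μ π w t * w (t + 1)) * fun ω => A i ω / μ i - 1)
      (π (t + 1) ⁻¹' {i}) P := by
  have hle := hrev.info_le hnull.le hnull.measurable ht.le
  have hfiber := hrev.measurableSet_choice_eq hnull.le hnull.measurable ht i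
  rw [mul_assoc]
  refine hint.integrableOn.mul_bdd (c := 1 / (1 - μ i) * (1 / μ i)) ?_ ?_
  · exact (((hbet.measurable t ht).mono hle le_rfl).mul
      (((hnull.measurable i).div_const _).sub_const _)).aestronglyMeasurable
  · filter_upwards [ae_restrict_mem hfiber, ae_restrict_of_ae (hnull.mem_Icc i),
      ae_restrict_of_ae (hbet.mem_Icc t ht)] with ω hω hAω hwω
    rw [show π (t + 1) ω = i from hω] at hwω
    rw [Pi.mul_apply, norm_mul]
    exact mul_le_mul (abs_bet_le (hnull.mean_mem i) hwω) (abs_payoff_le (hnull.mean_mem i) hAω)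
      (abs_nonneg _) (one_div_nonneg.2 (sub_nonneg.2 (hnull.mean_mem i).2.le))

lemma integrableOn_wealth_succ (hrev : IsRevelation A 𝒢 I₀ T π I ℱ)
    (hnull : IsGlobalNull 𝒢 P A μ) (hbet : IsPredictableBet P μ T π ℱ w) (ht : t < T) (i : ι)
    (hint : Integrable (wealth A μ π w t) P) :
    IntegrableOn (wealth A μ π w (t + 1)) (π (t + 1) ⁻¹' {i}) P := by
  have hfiber := hrev.measurableSet_choice_eq hnull.le hnull.measurable ht i
  rw [integrableOn_congr_fun (wealth_succ_eqOn_choice_eq t i) hfiber]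
  exact hint.integrableOn.add (hrev.integrableOn_wealth_mul_bet_mul_payoff hnull hbet ht i hint)

variable [IsProbabilityMeasure P]

lemma condExp_payoff_ae_eq_zero (hrev : IsRevelation A 𝒢 I₀ T π I ℱ)
    (hnull : IsGlobalNull 𝒢 P A μ) (ht : t < T) (i : ι) :
    (P.restrict (π (t + 1) ⁻¹' {i}))[fun ω => A i ω / μ i - 1 | ℱ t]
      =ᵐ[P.restrict (π (t + 1) ⁻¹' {i})] 0 := by
  have hAint := hnull.integrable i
  have hcentred : ∫ ω, (A i ω / μ i - 1) ∂P = 0 := by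
    rw [integral_sub (hAint.div_const _) (integrable_const _), integral_div, hnull.integral_eq,
      div_self (hnull.mean_mem i).1.ne']
    simp
  have hmeas : StronglyMeasurable[MeasurableSpace.comap (A i) inferInstance]
      fun ω => A i ω / μ i - 1 :=
    (((comap_measurable (A i)).div_const _).sub_const _).stronglyMeasurable
  have hcond := (hrev.coarserOn_choice_eq ht i).condExp_restrict_ae_eq_integral
    (hrev.info_le hnull.le hnull.measurable ht.le) (sigmaExcept_le hnull.le hnull.measurable i)
    (hnull.measurable i).comap_le hmeas ((hAint.div_const _).sub (integrable_const _))
    (indep_comap_sigmaExcept hnull.le hnull.measurable hnull.iIndep i)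
  rwa [hcentred] at hcond

lemma condExp_restrict_wealth_succ (hrev : IsRevelation A 𝒢 I₀ T π I ℱ)
    (hnull : IsGlobalNull 𝒢 P A μ) (hbet : IsPredictableBet P μ T π ℱ w) (ht : t < T) (i : ι)
    (hint : Integrable (wealth A μ π w t) P) :
    (P.restrict (π (t + 1) ⁻¹' {i}))[wealth A μ π w (t + 1) | ℱ t]
      =ᵐ[P.restrict (π (t + 1) ⁻¹' {i})] wealth A μ π w t := by
  have hle := hrev.info_le hnull.le hnull.measurable ht.le
  have hfiber := hrev.measurableSet_choice_eq hnull.le hnull.measurable ht i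
  have hwealth := hrev.measurable_wealth (μ := μ) hbet.measurable ht.le
  refine (condExp_congr_ae ((wealth_succ_eqOn_choice_eq t i).aeEq_restrict hfiber)).trans ?_
  exact condExp_add_mul_ae_eq_of_condExp_ae_eq_zero hle hwealth.stronglyMeasurable hint.restrict
    (hwealth.mul (hbet.measurable t ht)).stronglyMeasurable
    (((hnull.integrable i).div_const _).sub (integrable_const _)).restrict
    (hrev.integrableOn_wealth_mul_bet_mul_payoff hnull hbet ht i hint)
    (hrev.condExp_payoff_ae_eq_zero hnull ht i)

lemma integrable_wealth (hrev : IsRevelation A 𝒢 I₀ T π I ℱ) (hnull : IsGlobalNull 𝒢 P A μ)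
    (hbet : IsPredictableBet P μ T π ℱ w) (ht : t ≤ T) : Integrable (wealth A μ π w t) P := by
  induction t with
  | zero => exact (funext wealth_zero : wealth A μ π w 0 = _) ▸ integrable_const 1
  | succ t ih =>
    have hint := ih (Nat.le_of_lt ht)
    exact integrable_of_condExp_restrict_fiber
      (hrev.info_le hnull.le hnull.measurable (Nat.le_of_lt ht)) (hrev.measurable_choice t ht)
      (wealth_nonneg hnull hbet ht)
      (fun i => hrev.integrableOn_wealth_succ hnull hbet ht i hint) hint
      (fun i => hrev.condExp_restrict_wealth_succ hnull hbet ht i hint)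

lemma condExp_wealth_succ (hrev : IsRevelation A 𝒢 I₀ T π I ℱ) (hnull : IsGlobalNull 𝒢 P A μ)
    (hbet : IsPredictableBet P μ T π ℱ w) (ht : t < T) :
    P[wealth A μ π w (t + 1) | ℱ t] =ᵐ[P] wealth A μ π w t :=
  condExp_ae_eq_of_condExp_restrict_fiber (hrev.info_le hnull.le hnull.measurable ht.le)
    (hrev.measurable_choice t ht) (hrev.integrable_wealth hnull hbet ht) fun i =>
      hrev.condExp_restrict_wealth_succ hnull hbet ht i (hrev.integrable_wealth hnull hbet ht.le)

end IsRevelation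

theorem ibet_wealth_is_nonneg_martingale_general [Countable ι] [MeasurableSpace ι]
    [MeasurableSingletonClass ι] [IsProbabilityMeasure P] (hnull : IsGlobalNull 𝒢 P A μ)
    (hrev : IsRevelation A 𝒢 I₀ T π I ℱ) (hbet : IsPredictableBet P μ T π ℱ w) :
    (∀ t ≤ T, (∀ᵐ ω ∂P, 0 ≤ wealth A μ π w t ω) ∧ StronglyMeasurable[ℱ t] (wealth A μ π w t) ∧
      Integrable (wealth A μ π w t) P) ∧
    (∀ ω, wealth A μ π w 0 ω = 1) ∧
    (∀ t < T, P[wealth A μ π w (t + 1) | ℱ t] =ᵐ[P] wealth A μ π w t) :=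
  ⟨fun _ ht => ⟨wealth_nonneg hnull hbet ht,
      (hrev.measurable_wealth hbet.measurable ht).stronglyMeasurable,
      hrev.integrable_wealth hnull hbet ht⟩,
    wealth_zero, fun _ ht => hrev.condExp_wealth_succ hnull hbet ht⟩

end Wealth

/-- **The i-bet wealth process is a nonnegative martingale.**
Under the global causal null, the wealth process `(M t)` of the i-bet test is a nonnegative
martingale with respect to the filtration `(ℱ t)`: `M t ≥ 0` almost surely, `M t` is
`ℱ t`-measurable, `M 0 = 1`, and `E(M t | ℱ (t−1)) = M (t−1)` a.s. for `1 ≤ t ≤ n − |I₀|`. -/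
theorem ibet_wealth_is_nonneg_martingale
    {Ω : Type*} {m0 : MeasurableSpace Ω} (P : Measure Ω) [IsProbabilityMeasure P]
    (n : ℕ) (μ : Fin n → ℝ) (hμ : ∀ i, μ i ∈ Set.Ioo (0:ℝ) 1)
    -- the treatment assignments
    (A : Fin n → Ω → ℝ) (hAmeas : ∀ i, Measurable (A i))
    (hA01 : ∀ i ω, A i ω = 0 ∨ A i ω = 1)
    (hA1 : ∀ i, P {ω | A i ω = 1} = ENNReal.ofReal (μ i))
    -- the σ-algebra generated by all outcomes and covariates
    (𝒢 : MeasurableSpace Ω) (h𝒢 : 𝒢 ≤ m0)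
    -- global causal null: the `A i` are mutually independent and the vector `(A 1, …, A n)`
    -- is independent of `𝒢`
    (hindep : iIndep (fun j : Option (Fin n) =>
        j.elim 𝒢 (fun i => MeasurableSpace.comap (A i) inferInstance)) P)
    -- the initially revealed holdout set
    (I₀ : Finset (Fin n))
    -- the interactively chosen ordering `π`, the revealed sets `I t`, and the filtration `ℱ`
    (π : ℕ → Ω → Fin n) (I : ℕ → Ω → Finset (Fin n)) (ℱ : ℕ → MeasurableSpace Ω)
    (hI0 : ∀ ω, I 0 ω = I₀)
    (hIsucc : ∀ t, t + 1 ≤ n - I₀.card → ∀ ω, I (t+1) ω = insert (π (t+1) ω) (I t ω))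
    (hℱ0 : ℱ 0 = 𝒢 ⊔ ⨆ i ∈ I₀, MeasurableSpace.comap (A i) inferInstance)
    (hℱsucc : ∀ t, t + 1 ≤ n - I₀.card → ℱ (t+1) = ℱ t ⊔
        MeasurableSpace.comap (fun ω => A (π (t+1) ω) ω) inferInstance)
    -- `π (t+1)` is `ℱ t`-measurable with values outside the already revealed set
    (hπmeas : ∀ t, t + 1 ≤ n - I₀.card → Measurable[ℱ t] (π (t+1)))
    (hπnew : ∀ t, t + 1 ≤ n - I₀.card → ∀ ω, π (t+1) ω ∉ I t ω)
    -- the predictable bets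
    (w : ℕ → Ω → ℝ)
    (hwmeas : ∀ t, t + 1 ≤ n - I₀.card → Measurable[ℱ t] (w (t+1)))
    (hw : ∀ t, t + 1 ≤ n - I₀.card → ∀ᵐ ω ∂P, w (t+1) ω ∈
        Set.Icc (-(μ (π (t+1) ω) / (1 - μ (π (t+1) ω)))) 1)
    -- the wealth process
    (M : ℕ → Ω → ℝ)
    (hM : ∀ t, t ≤ n - I₀.card → ∀ ω, M t ω = ∏ j ∈ Finset.range t,
        (1 + w (j+1) ω * (A (π (j+1) ω) ω / μ (π (j+1) ω) - 1)))
    :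
    (∀ t, t ≤ n - I₀.card → (∀ᵐ ω ∂P, 0 ≤ M t ω) ∧ StronglyMeasurable[ℱ t] (M t)) ∧
    (∀ ω, M 0 ω = 1) ∧
    (∀ t, 1 ≤ t → t ≤ n - I₀.card → P[M t | ℱ (t-1)] =ᵐ[P] M (t-1)) := by
  have hnull := IsGlobalNull.of_zero_or_one hμ hAmeas hA01 hA1 h𝒢 hindep
  have hrev : IsRevelation A 𝒢 I₀ (n - I₀.card) π (fun t ω => I t ω) ℱ :=
    ⟨fun ω => by rw [hI0], fun t ht ω => by rw [hIsucc t ht, Finset.coe_insert], hℱ0, hℱsucc,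
      hπmeas, hπnew⟩
  have hwealth : ∀ t ≤ n - I₀.card, M t = wealth A μ π w t := fun t ht => funext (hM t ht)
  obtain ⟨hadapted, hzero, hstep⟩ :=
    ibet_wealth_is_nonneg_martingale_general hnull hrev ⟨hwmeas, hw⟩
  refine ⟨fun t ht => ?_, ?_, fun t ht1 ht => ?_⟩
  · rw [hwealth t ht]
    exact ⟨(hadapted t ht).1, (hadapted t ht).2.1⟩
  · rwa [hwealth 0 (Nat.zero_le _)]
  · obtain ⟨s, rfl⟩ := Nat.exists_eq_add_of_le' ht1
    rw [hwealth _ ht, Nat.add_sub_cancel, hwealth s (Nat.le_of_lt ht)]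
    exact hstep s ht
end

section
/- Under the global causal null, the conditional expectation of the treatment assignment of the interactively selected subject equals its treatment probability: for every t ≥ 1, E(A_{π_t} | ℱ_{t−1}) = μ_{π_t} almost surely. Equivalently, writing the left side as a sum over possible values j of π_t, E(A_j | ℱ_{t−1}) = μ_j on the event {π_t = j} for every j ∈ {1,…,n}. -/
open MeasureTheory ProbabilityTheory
open scoped ENNReal

/-!
Fix `j` and let `ℋ j` (`leaveOneOut 𝒢 A j` below) be generated by `𝒢` and all assignments except
`A j`. As long as `j` has not been revealed, nothing observed depends on `A j`: by induction on `t`,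
every event of `ℱ t`, intersected with `{j ∉ I t}`, lies in `ℋ j`. Since `{π (t+1) = j}` is an
`ℱ t`-measurable subset of `{j ∉ I t}`, on it `ℱ t` carries no more information than `ℱ t ⊓ ℋ j`,
which is independent of `A j`. Hence `E(A j | ℱ t)` equals `E(A j)` there, and partitioning by the
value of `π (t+1)` finishes the argument.
-/

section TraceLE

variable {Ω ι β : Type*} {m m₁ m₂ m' : MeasurableSpace Ω} {E : Set Ω}

/-- The trace of the σ-algebra `m` on `E` is contained in `m'`. The intersections are required to
be measurable in the ambient space, so this includes measurability of `E` with respect to `m'`. -/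
def TraceLE (m m' : MeasurableSpace Ω) (E : Set Ω) : Prop :=
  ∀ s, MeasurableSet[m] s → MeasurableSet[m'] (E ∩ s)

namespace TraceLE

theorem empty : TraceLE m m' ∅ := fun s _ => by
  rw [Set.empty_inter]
  exact MeasurableSet.empty

theorem univ_of_le (h : m ≤ m') : TraceLE m m' Set.univ := fun s hs => by
  rw [Set.univ_inter]
  exact h s hs

theorem measurableSet (h : TraceLE m m' E) : MeasurableSet[m'] E := by
  simpa only [Set.inter_univ] using h Set.univ MeasurableSet.univ

theorem inter (h : TraceLE m m' E) {F : Set Ω} (hF : MeasurableSet[m] F) :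
    TraceLE m m' (E ∩ F) := fun s hs => by
  rw [Set.inter_assoc]
  exact h _ (hF.inter hs)

theorem sup (h₁ : TraceLE m₁ m' E) (h₂ : TraceLE m₂ m' E) : TraceLE (m₁ ⊔ m₂) m' E := by
  intro s hs
  replace hs := MeasurableSpace.measurableSet_sup.1 hs
  induction hs with
  | basic s hs => exact hs.elim (h₁ s) (h₂ s)
  | empty => simpa only [Set.inter_empty] using MeasurableSet.empty
  | compl s _ ih =>
    rw [← Set.sdiff_eq, ← Set.sdiff_self_inter]
    exact h₁.measurableSet.diff ih
  | iUnion f _ ih =>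
    rw [Set.inter_iUnion]
    exact MeasurableSet.iUnion ih

theorem comap_selected [Countable ι] [MeasurableSpace ι] [MeasurableSingletonClass ι]
    [MeasurableSpace β] {A : ι → Ω → β} {π : Ω → ι} {J : Set ι} (h : TraceLE m m' E)
    (hπ : Measurable[m] π) (hπJ : ∀ ω ∈ E, π ω ∈ J) (hA : ∀ k ∈ J, Measurable[m'] (A k)) :
    TraceLE (MeasurableSpace.comap (fun ω => A (π ω) ω) inferInstance) m' E := by
  rintro _ ⟨B, hB, rfl⟩
  have hpartition : E ∩ (fun ω => A (π ω) ω) ⁻¹' B = ⋃ k ∈ J, (E ∩ π ⁻¹' {k}) ∩ A k ⁻¹' B := by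
    ext ω
    simp only [Set.mem_inter_iff, Set.mem_preimage, Set.mem_iUnion, Set.mem_singleton_iff]
    grind
  rw [hpartition]
  exact MeasurableSet.biUnion J.to_countable fun k hk =>
    (h _ (hπ (measurableSet_singleton k))).inter (hA k hk hB)

end TraceLE

end TraceLE

section Selected

variable {Ω ι β : Type*} {m m0 : MeasurableSpace Ω} {P : Measure Ω} [MeasurableSpace ι]
  [MeasurableSingletonClass ι] {π : Ω → ι}

theorem measurable_selected [Countable ι] [MeasurableSpace β] {A : ι → Ω → β}
    (hA : ∀ i, Measurable (A i)) (hπ : Measurable π) : Measurable fun ω => A (π ω) ω :=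
  (measurable_from_prod_countable_right (f := fun p : ι × Ω => A p.1 p.2) hA).comp
    (hπ.prodMk measurable_id)

variable [NormedAddCommGroup β] {A : ι → Ω → β}

theorem integrable_selected [Finite ι] (hA : ∀ i, Integrable (A i) P) (hπ : Measurable π) :
    Integrable (fun ω => A (π ω) ω) P := by
  classical
  cases nonempty_fintype ι
  have hsum : (fun ω => A (π ω) ω) = fun ω => ∑ j, (π ⁻¹' {j}).indicator (A j) ω := by
    ext ω
    simp [Set.indicator_apply]
  rw [hsum]
  exact integrable_finsetSum _ fun j _ => (hA j).indicator (hπ (measurableSet_singleton j))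

variable [NormedSpace ℝ β] [CompleteSpace β]

theorem condExp_ae_eq_restrict_of_ae_eq_restrict {f g : Ω → β} {s : Set Ω} (hf : Integrable f P)
    (hg : Integrable g P) (hs : MeasurableSet[m] s) (hfg : f =ᵐ[P.restrict s] g) :
    P[f | m] =ᵐ[P.restrict s] P[g | m] := by
  have hdiff : P[f - g | m] =ᵐ[P.restrict s] 0 :=
    condExp_ae_eq_restrict_zero hs (hfg.mono fun ω hω => by simp [hω])
  filter_upwards [hdiff, ae_restrict_of_ae (condExp_sub hf hg m)] with ω hzero hsub
  exact sub_eq_zero.1 (hsub.symm.trans hzero)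

theorem condExp_selected [Countable ι] (hm : m ≤ m0) (hA : ∀ i, Integrable (A i) P)
    (hAπ : Integrable (fun ω => A (π ω) ω) P) (hπ : Measurable[m] π) :
    P[fun ω => A (π ω) ω | m] =ᵐ[P] fun ω => (P[A (π ω) | m]) ω := by
  have hcell : ∀ j, ∀ᵐ ω ∂P, π ω = j → (P[fun ω => A (π ω) ω | m]) ω = (P[A j | m]) ω := by
    intro j
    have hj : MeasurableSet[m] (π ⁻¹' {j}) := hπ (measurableSet_singleton j)
    refine (ae_restrict_iff' (hm _ hj)).1
      (condExp_ae_eq_restrict_of_ae_eq_restrict hAπ (hA j) hj ?_)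
    filter_upwards [ae_restrict_mem (hm _ hj)] with ω hω
    rw [Set.mem_singleton_iff.1 hω]
  filter_upwards [ae_all_iff.2 hcell] with ω hω
  exact hω _ rfl

end Selected

section Independence

variable {Ω ι β : Type*} {𝒢 m m₁ m' m0 : MeasurableSpace Ω} {P : Measure Ω}

theorem condExp_ae_eq_restrict_integral_of_indep_of_traceLE [NormedAddCommGroup β] [NormedSpace ℝ β]
    [CompleteSpace β] [IsFiniteMeasure P] {f : Ω → β} {s : Set Ω} (hm₁ : m₁ ≤ m0) (hm : m ≤ m0)
    (hf : StronglyMeasurable[m₁] f) (hindep : Indep m₁ m' P) (hs : MeasurableSet[m] s)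
    (htrace : TraceLE m m' s) : P[f | m] =ᵐ[P.restrict s] fun _ => ∫ ω, f ω ∂P := by
  have hinf : m ⊓ m' ≤ m0 := inf_le_left.trans hm
  have hlocal : P[f | m] =ᵐ[P.restrict s] P[f | m ⊓ m'] := by
    refine condExp_ae_eq_restrict_of_measurableSpace_eq_on hm hinf hs fun t =>
      ⟨fun ht => MeasurableSpace.measurableSet_inf.2 ⟨ht, ?_⟩, inf_le_left (a := m) _⟩
    rw [← Set.inter_self s, Set.inter_assoc]
    exact htrace _ ht
  exact hlocal.trans (ae_restrict_of_ae (condExp_indep_eq hm₁ hinf hf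
    (indep_of_indep_of_le_right hindep inf_le_right)))

variable [MeasurableSpace β]

/-- The σ-algebra generated by `𝒢` and all the variables `A i` with `i ≠ j`. It bounds
the information an analyst can have before `A j` is revealed. -/
abbrev leaveOneOut (𝒢 : MeasurableSpace Ω) (A : ι → Ω → β) (j : ι) : MeasurableSpace Ω :=
  𝒢 ⊔ ⨆ i ≠ j, MeasurableSpace.comap (A i) inferInstance

variable {A : ι → Ω → β}

theorem comap_le_leaveOneOut {i j : ι} (hij : i ≠ j) :
    MeasurableSpace.comap (A i) inferInstance ≤ leaveOneOut 𝒢 A j :=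
  le_sup_of_le_right (le_iSup₂_of_le i hij le_rfl)

theorem indep_comap_leaveOneOut (hA : ∀ i, Measurable (A i)) (h𝒢 : 𝒢 ≤ m0)
    (hindep : iIndep (fun j : Option ι =>
      j.elim 𝒢 (fun i => MeasurableSpace.comap (A i) inferInstance)) P) (j : ι) :
    Indep (MeasurableSpace.comap (A j) inferInstance) (leaveOneOut 𝒢 A j) P := by
  have hle : ∀ k : Option ι,
      k.elim 𝒢 (fun i => MeasurableSpace.comap (A i) inferInstance) ≤ m0
    | none => h𝒢
    | some i => (hA i).comap_le
  have hsplit := indep_iSup_of_disjoint hle hindep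
    (S := {some j}) (T := {some j}ᶜ) disjoint_compl_right
  simpa [leaveOneOut, iSup_option] using hsplit

end Independence

/-- An interactive selection up to time `T`: starting from the information in `𝒢` and the
values `A i`, `i ∈ I₀`, an analyst picks at each time `t + 1 ≤ T` a fresh index `π (t+1)` on the
basis of the information `ℱ t` and then observes `A (π (t+1))`. The set `I t` collects the indices
revealed by time `t`. Selection times start at `1`: `π 0`, like everything after time `T`, is
unconstrained. -/
structure IsInteractiveSelection {Ω ι β : Type*} [DecidableEq ι] [MeasurableSpace ι]
    [MeasurableSpace β] (𝒢 : MeasurableSpace Ω) (A : ι → Ω → β) (I₀ : Finset ι) (T : ℕ)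
    (π : ℕ → Ω → ι) (I : ℕ → Ω → Finset ι) (ℱ : ℕ → MeasurableSpace Ω) : Prop where
  revealed_zero : ∀ ω, I 0 ω = I₀
  revealed_succ : ∀ t < T, ∀ ω, I (t + 1) ω = insert (π (t + 1) ω) (I t ω)
  info_zero : ℱ 0 = 𝒢 ⊔ ⨆ i ∈ I₀, MeasurableSpace.comap (A i) inferInstance
  info_succ : ∀ t < T, ℱ (t + 1) =
    ℱ t ⊔ MeasurableSpace.comap (fun ω => A (π (t + 1) ω) ω) inferInstance
  measurable_selection : ∀ t < T, Measurable[ℱ t] (π (t + 1))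
  selection_notMem : ∀ t < T, ∀ ω, π (t + 1) ω ∉ I t ω

namespace IsInteractiveSelection

variable {Ω ι β : Type*} [DecidableEq ι] [MeasurableSpace ι] [MeasurableSpace β]
  {𝒢 m0 : MeasurableSpace Ω} {A : ι → Ω → β} {I₀ : Finset ι} {T : ℕ} {π : ℕ → Ω → ι}
  {I : ℕ → Ω → Finset ι} {ℱ : ℕ → MeasurableSpace Ω}

theorem traceLE_leaveOneOut_zero (h : IsInteractiveSelection 𝒢 A I₀ T π I ℱ) (j : ι) :
    TraceLE (ℱ 0) (leaveOneOut 𝒢 A j) {ω | j ∉ I 0 ω} := by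
  simp only [h.revealed_zero]
  by_cases hj : j ∈ I₀
  · simpa [hj] using TraceLE.empty
  · have hle : ℱ 0 ≤ leaveOneOut 𝒢 A j := by
      rw [h.info_zero]
      exact sup_le le_sup_left
        (iSup₂_le fun i hi => comap_le_leaveOneOut (ne_of_mem_of_not_mem hi hj))
    simpa [hj] using TraceLE.univ_of_le hle

variable [Countable ι] [MeasurableSingletonClass ι]

theorem traceLE_leaveOneOut (h : IsInteractiveSelection 𝒢 A I₀ T π I ℱ) (j : ι) {t : ℕ}
    (ht : t ≤ T) : TraceLE (ℱ t) (leaveOneOut 𝒢 A j) {ω | j ∉ I t ω} := by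
  induction t with
  | zero => exact h.traceLE_leaveOneOut_zero j
  | succ t ih =>
    have hπ := h.measurable_selection t ht
    have hset : {ω | j ∉ I (t + 1) ω} = {ω | j ∉ I t ω} ∩ π (t + 1) ⁻¹' {j}ᶜ := by
      ext ω
      simp [h.revealed_succ t ht, eq_comm, and_comm]
    have hold : TraceLE (ℱ t) (leaveOneOut 𝒢 A j) {ω | j ∉ I (t + 1) ω} :=
      hset ▸ (ih (Nat.le_of_succ_le ht)).inter (hπ (measurableSet_singleton j).compl)
    rw [h.info_succ t ht]
    refine hold.sup (hold.comap_selected (J := {j}ᶜ) hπ (fun ω hω => ?_) fun k hk =>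
      (comap_measurable (A k)).mono (comap_le_leaveOneOut hk) le_rfl)
    exact (hset ▸ hω : ω ∈ {ω | j ∉ I t ω} ∩ π (t + 1) ⁻¹' {j}ᶜ).2

theorem traceLE_leaveOneOut_selection (h : IsInteractiveSelection 𝒢 A I₀ T π I ℱ) (j : ι) {t : ℕ}
    (ht : t < T) : TraceLE (ℱ t) (leaveOneOut 𝒢 A j) (π (t + 1) ⁻¹' {j}) := by
  have hsubset : π (t + 1) ⁻¹' {j} ⊆ {ω | j ∉ I t ω} := by
    rintro ω rfl
    exact h.selection_notMem t ht ω
  rw [← Set.inter_eq_right.2 hsubset]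
  exact (h.traceLE_leaveOneOut j ht.le).inter
    (h.measurable_selection t ht (measurableSet_singleton j))

theorem info_le (h : IsInteractiveSelection 𝒢 A I₀ T π I ℱ) (h𝒢 : 𝒢 ≤ m0)
    (hA : ∀ i, Measurable (A i)) {t : ℕ} (ht : t ≤ T) : ℱ t ≤ m0 := by
  induction t with
  | zero =>
    rw [h.info_zero]
    exact sup_le h𝒢 (iSup₂_le fun i _ => (hA i).comap_le)
  | succ t ih =>
    have hle : ℱ t ≤ m0 := ih (Nat.le_of_succ_le ht)
    rw [h.info_succ t ht]
    exact sup_le hle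
      (measurable_selected hA ((h.measurable_selection t ht).mono hle le_rfl)).comap_le

end IsInteractiveSelection

section ZeroOne

variable {Ω : Type*} {m0 : MeasurableSpace Ω} {P : Measure Ω} {X : Ω → ℝ}

theorem integrable_of_eq_zero_or_one [IsFiniteMeasure P] (hX : Measurable X)
    (h01 : ∀ ω, X ω = 0 ∨ X ω = 1) : Integrable X P :=
  Integrable.of_bound hX.aestronglyMeasurable 1
    (ae_of_all _ fun ω => by rcases h01 ω with h | h <;> simp [h])

theorem integral_of_eq_zero_or_one (hX : Measurable X) (h01 : ∀ ω, X ω = 0 ∨ X ω = 1) {p : ℝ}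
    (hp : 0 ≤ p) (hP : P {ω | X ω = 1} = ENNReal.ofReal p) : ∫ ω, X ω ∂P = p := by
  have hindicator : X = (X ⁻¹' {1}).indicator 1 := by
    ext ω
    rcases h01 ω with h | h <;> simp [Set.indicator, h]
  rw [hindicator, integral_indicator_one (hX (measurableSet_singleton 1)), measureReal_def]
  exact (congrArg ENNReal.toReal hP).trans (ENNReal.toReal_ofReal hp)

end ZeroOne

theorem ibet_condexp_selected_assignment_general {Ω ι β : Type*} {m0 : MeasurableSpace Ω}
    {P : Measure Ω} [IsFiniteMeasure P] [Finite ι] [DecidableEq ι] [MeasurableSpace ι]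
    [MeasurableSingletonClass ι] [NormedAddCommGroup β] [NormedSpace ℝ β] [CompleteSpace β]
    [SecondCountableTopology β] [MeasurableSpace β] [OpensMeasurableSpace β] {A : ι → Ω → β}
    (hA : ∀ i, Measurable (A i)) (hAint : ∀ i, Integrable (A i) P)
    {𝒢 : MeasurableSpace Ω} (h𝒢 : 𝒢 ≤ m0)
    (hindep : iIndep (fun j : Option ι =>
      j.elim 𝒢 (fun i => MeasurableSpace.comap (A i) inferInstance)) P)
    {I₀ : Finset ι} {T : ℕ} {π : ℕ → Ω → ι} {I : ℕ → Ω → Finset ι} {ℱ : ℕ → MeasurableSpace Ω}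
    (h : IsInteractiveSelection 𝒢 A I₀ T π I ℱ) :
    (∀ t < T, P[fun ω => A (π (t + 1) ω) ω | ℱ t] =ᵐ[P]
      fun ω => ∫ ω', A (π (t + 1) ω) ω' ∂P) ∧
    (∀ t < T, ∀ j, ∀ᵐ ω ∂P, π (t + 1) ω = j → (P[A j | ℱ t]) ω = ∫ ω', A j ω' ∂P) := by
  have hle {t} (ht : t < T) : ℱ t ≤ m0 := h.info_le h𝒢 hA ht.le
  have hcell : ∀ t < T, ∀ j, ∀ᵐ ω ∂P,
      π (t + 1) ω = j → (P[A j | ℱ t]) ω = ∫ ω', A j ω' ∂P := by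
    intro t ht j
    have hj : MeasurableSet[ℱ t] (π (t + 1) ⁻¹' {j}) :=
      h.measurable_selection t ht (measurableSet_singleton j)
    exact (ae_restrict_iff' (hle ht _ hj)).1 <|
      condExp_ae_eq_restrict_integral_of_indep_of_traceLE
        (hA j).comap_le (hle ht) (comap_measurable (A j)).stronglyMeasurable
        (indep_comap_leaveOneOut hA h𝒢 hindep j) hj (h.traceLE_leaveOneOut_selection j ht)
  refine ⟨fun t ht => ?_, hcell⟩
  have hπ := h.measurable_selection t ht
  filter_upwards [condExp_selected (hle ht) hAint
    (integrable_selected hAint (hπ.mono (hle ht) le_rfl)) hπ, ae_all_iff.2 (hcell t ht)]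
    with ω hselected hmean
  rw [hselected, hmean _ rfl]

/-- **Conditional mean of the interactively selected assignment.**
Under the global causal null, the conditional expectation of the treatment assignment of the
interactively selected subject equals its treatment probability:
`E(A (π t) | ℱ (t−1)) = μ (π t)` almost surely; equivalently, `E(A j | ℱ (t−1)) = μ j` on the
event `{π t = j}` for every `j`. -/
theorem ibet_condexp_selected_assignment
    {Ω : Type*} {m0 : MeasurableSpace Ω} (P : Measure Ω) [IsProbabilityMeasure P]
    (n : ℕ) (μ : Fin n → ℝ) (hμ : ∀ i, μ i ∈ Set.Ioo (0:ℝ) 1)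
    -- the treatment assignments
    (A : Fin n → Ω → ℝ) (hAmeas : ∀ i, Measurable (A i))
    (hA01 : ∀ i ω, A i ω = 0 ∨ A i ω = 1)
    (hA1 : ∀ i, P {ω | A i ω = 1} = ENNReal.ofReal (μ i))
    -- the σ-algebra generated by all outcomes and covariates
    (𝒢 : MeasurableSpace Ω) (h𝒢 : 𝒢 ≤ m0)
    -- global causal null: the `A i` are mutually independent and the vector `(A 1, …, A n)`
    -- is independent of `𝒢`
    (hindep : iIndep (fun j : Option (Fin n) =>
        j.elim 𝒢 (fun i => MeasurableSpace.comap (A i) inferInstance)) P)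
    -- the initially revealed holdout set
    (I₀ : Finset (Fin n))
    -- the interactively chosen ordering `π`, the revealed sets `I t`, and the filtration `ℱ`
    (π : ℕ → Ω → Fin n) (I : ℕ → Ω → Finset (Fin n)) (ℱ : ℕ → MeasurableSpace Ω)
    (hI0 : ∀ ω, I 0 ω = I₀)
    (hIsucc : ∀ t, t + 1 ≤ n - I₀.card → ∀ ω, I (t+1) ω = insert (π (t+1) ω) (I t ω))
    (hℱ0 : ℱ 0 = 𝒢 ⊔ ⨆ i ∈ I₀, MeasurableSpace.comap (A i) inferInstance)
    (hℱsucc : ∀ t, t + 1 ≤ n - I₀.card → ℱ (t+1) = ℱ t ⊔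
        MeasurableSpace.comap (fun ω => A (π (t+1) ω) ω) inferInstance)
    -- `π (t+1)` is `ℱ t`-measurable with values outside the already revealed set
    (hπmeas : ∀ t, t + 1 ≤ n - I₀.card → Measurable[ℱ t] (π (t+1)))
    (hπnew : ∀ t, t + 1 ≤ n - I₀.card → ∀ ω, π (t+1) ω ∉ I t ω)
    :
    -- the conditional expectation of the selected assignment equals its treatment probability
    (∀ t, t + 1 ≤ n - I₀.card →
      P[fun ω => A (π (t+1) ω) ω | ℱ t] =ᵐ[P] fun ω => μ (π (t+1) ω)) ∧
    -- equivalently, on the event `{π (t+1) = j}` one has `E(A j | ℱ t) = μ j`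
    (∀ t, t + 1 ≤ n - I₀.card → ∀ j : Fin n,
      ∀ᵐ ω ∂P, π (t+1) ω = j → (P[A j | ℱ t]) ω = μ j) := by
  simpa only [Nat.add_one_le_iff,
    fun i => integral_of_eq_zero_or_one (hAmeas i) (hA01 i) (hμ i).1.le (hA1 i)] using
    ibet_condexp_selected_assignment_general hAmeas
      (fun i => integrable_of_eq_zero_or_one (hAmeas i) (hA01 i)) h𝒢 hindep
      ⟨hI0, hIsucc, hℱ0, hℱsucc, hπmeas, hπnew⟩
end
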